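/- Let K and L be number fields and let k, l ≥ 2 be integers. Then 𝔻_{K,k} and 𝔻_{L,l} are topologically conjugate — i.e., there exist an additive group isomorphism A : 𝓞_K → 𝓞_L and a homeomorphism f : 𝕏_{K,k} → 𝕏_{L,l} satisfying f(t + X) = A(t) + f(X) for all t ∈ 𝓞_K and X ∈ 𝕏_{K,k} — if and only if K and L are isomorphic as fields and k = l. -/

import Mathlib

open NumberField

/-- The product (Cantor) topology on the power set `𝒫(G) ≅ {0,1}^G`. -/
noncomputable instance powerSetTopology (G : Type*) : TopologicalSpace (Set G) :=
  TopologicalSpace.induced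
    (fun (S : Set G) (g : G) => @decide (g ∈ S) (Classical.propDecidable _))
    inferInstance

/-- The shift space `𝕏_{K,k}` of admissible sets: subsets of `𝓞 K` missing at least
one residue class modulo `𝔭^k` for every nonzero prime ideal `𝔭`. -/
def admissibleSets (K : Type*) [Field K] [NumberField K] (k : ℕ) : Set (Set (𝓞 K)) :=
  {X | ∀ P : Ideal (𝓞 K), P.IsPrime → P ≠ ⊥ → ∃ c : 𝓞 K, ∀ y ∈ X, y - c ∉ P ^ k}

/-!
Since `f {0}` is nonempty, continuity yields a finite set `W` such that `A` maps every admissible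
set whose points do not differ by elements of `W` to an admissible set; the same holds for `A⁻¹`.

Let `𝔭` lie above a prime `p` exceeding both degrees, and suppose that `A` maps `𝔭 ^ k` into no
`𝔮 ^ l` with `𝔮 ∣ p`. There are fewer than `p` such `𝔮`, so by B. H. Neumann's covering lemma no
coset `A (c + 𝔭 ^ k)` is covered by the `𝔮 ^ l`. The Chinese remainder theorem then produces a
sparse admissible set in `𝓞 L` whose preimage under `A` meets every class modulo `𝔭 ^ k`, a
contradiction. By symmetry `A (𝔭 ^ k) = 𝔮 ^ l` for some `𝔮 ∣ p`.

Now let `𝔭` be unramified of degree one; there are infinitely many such primes. Every class modulo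
`𝔭 ^ k` contains an integer, so `A x * A y ≡ A 1 * A (x * y)` modulo `𝔮`. Infinitely many `𝔮` turn
the congruence into an equality, whence `(A 1)⁻¹ * A` is a ring isomorphism. Moreover
`A (p ^ l) = p ^ l * A 1 ∈ 𝔮 ^ l`, so `p ^ l ∈ 𝔭 ^ k` and hence `k ≤ l`.
-/

section PowerSet

variable {G H : Type*}

theorem continuous_powerSet_iff {X : Type*} [TopologicalSpace X] {F : X → Set G} :
    Continuous F ↔ ∀ g, IsClopen {x | g ∈ F x} := by
  rw [continuous_induced_rng, continuous_pi_iff]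
  refine forall_congr' fun g => ?_
  rw [continuous_bool_rng true]
  simp [Set.preimage]

theorem isClopen_setOf_mem (g : G) : IsClopen {S : Set G | g ∈ S} :=
  continuous_powerSet_iff.1 continuous_id g

theorem continuous_image_equiv (e : G ≃ H) : Continuous (e '' · : Set G → Set H) := by
  refine continuous_powerSet_iff.2 fun h => ?_
  simpa only [e.image_eq_preimage_symm, Set.mem_preimage] using isClopen_setOf_mem (e.symm h)

/-- The homeomorphism of power sets induced by a bijection of the underlying types. -/
noncomputable def powerSetCongr (e : G ≃ H) : Set G ≃ₜ Set H where
  toEquiv := Equiv.Set.congr e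
  continuous_toFun := continuous_image_equiv e
  continuous_invFun := continuous_image_equiv e.symm

theorem exists_window_of_isOpen {𝒳 : Set (Set G)} {U : Set 𝒳} (hU : IsOpen U) {X : 𝒳}
    (hX : X ∈ U) :
    ∃ W : Finset G, ∀ Y : 𝒳, (∀ w ∈ W, w ∈ (Y : Set G) ↔ w ∈ (X : Set G)) → Y ∈ U := by
  obtain ⟨_, hopen, rfl⟩ := isOpen_induced_iff.1 hU
  obtain ⟨V, hV, rfl⟩ := isOpen_induced_iff.1 hopen
  obtain ⟨W, u, hu, hsub⟩ := isOpen_pi_iff.1 hV _ hX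
  refine ⟨W, fun Y hY => hsub fun w hw => ?_⟩
  exact (congrArg (· ∈ u w) (decide_eq_decide.2 (hY w hw))).mpr (hu w hw).2

end PowerSet

section Dynamics

variable {G H : Type*} [AddCommGroup G] [AddCommGroup H] {𝒳 : Set (Set G)} {𝒴 : Set (Set H)}

/-- A family of subsets of an additive group that is stable under all translations. -/
def IsTranslationInvariant (𝒳 : Set (Set G)) : Prop :=
  ∀ t, ∀ X ∈ 𝒳, (t + ·) '' X ∈ 𝒳

/-- Compatibility of `f : 𝒳 → 𝒴` with the translation actions along `A`: `f (t + X) = A t + f X`.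
The translate is a separate variable `Y`, so that `𝒳` need not be known to be invariant. -/
def IsEquivariant (A : G → H) (f : 𝒳 → 𝒴) : Prop :=
  ∀ (t : G) (X Y : 𝒳), (Y : Set G) = (t + ·) '' (X : Set G) →
    (f Y : Set H) = (A t + ·) '' (f X : Set H)

/-- `A` maps every member of `𝒳` whose distinct elements never differ by an element of a certain
finite set `W` into `𝒴`. -/
def PreservesSparse (𝒳 : Set (Set G)) (𝒴 : Set (Set H)) (A : G → H) : Prop :=
  ∃ W : Finset G, ∀ T ∈ 𝒳, T.Pairwise (fun s t => s - t ∉ W) → A '' T ∈ 𝒴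

theorem IsEquivariant.symm {A : G ≃ H} {f : 𝒳 ≃ 𝒴} (hf : IsEquivariant A f)
    (h𝒳 : IsTranslationInvariant 𝒳) : IsEquivariant A.symm f.symm := by
  intro t X Y hXY
  let Z : 𝒳 := ⟨(A.symm t + ·) '' (f.symm X : Set G), h𝒳 _ _ (f.symm X).2⟩
  have hZ : f Z = Y := by
    refine Subtype.ext ?_
    rw [hf (A.symm t) (f.symm X) Z rfl, f.apply_symm_apply, A.apply_symm_apply, hXY]
  rw [← hZ, f.symm_apply_apply]

theorem IsEquivariant.nonempty_apply {A : G → H} {f : 𝒳 → 𝒴} (hf : IsEquivariant A f)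
    (hinj : Function.Injective f) {X Y : 𝒳} (hXY : X ≠ Y) {t : G}
    (ht : (Y : Set G) = (t + ·) '' (X : Set G)) : (f X : Set H).Nonempty := by
  by_contra! hempty
  have himage := hf t X Y ht
  rw [hempty, Set.image_empty, ← hempty] at himage
  exact hXY (hinj (Subtype.ext himage.symm))

theorem mem_neg_translate_iff_of_pairwise {W : Finset G} {T : Set G}
    (hT : T.Pairwise fun s t => s - t ∉ W) {t w : G} (ht : t ∈ T) (hw : w ∈ W) :
    w ∈ (-t + ·) '' T ↔ w = 0 := by
  rw [Set.image_add_left, Set.mem_preimage, neg_neg]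
  refine ⟨fun hmem => ?_, fun h => by rwa [h, add_zero]⟩
  by_contra hne
  exact hT hmem ht (by simpa using hne) (by simpa using hw)

/-- The window `W` is one through which `f` sees that a fixed `b` lies in `f {0}`; a `W`-sparse set
looks like `{0}` around each of its points, so `f T` contains `A t + b` for all `t ∈ T`. -/
theorem IsEquivariant.preservesSparse {A : G → H} {f : 𝒳 → 𝒴} (hf : IsEquivariant A f)
    (hcont : Continuous f) (h𝒳 : IsTranslationInvariant 𝒳) (h𝒴 : IsTranslationInvariant 𝒴)
    (hlower : IsLowerSet 𝒴) {O : 𝒳} (hO : (O : Set G) = {0}) (hne : (f O : Set H).Nonempty) :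
    PreservesSparse 𝒳 𝒴 A := by
  obtain ⟨b, hb⟩ := hne
  have hopen : IsOpen {X : 𝒳 | b ∈ (f X : Set H)} :=
    ((isClopen_setOf_mem b).isOpen.preimage continuous_subtype_val).preimage hcont
  obtain ⟨W, hW⟩ := exists_window_of_isOpen hopen hb
  refine ⟨W, fun T hT hsparse => ?_⟩
  have hmem : ∀ t ∈ T, A t + b ∈ (f ⟨T, hT⟩ : Set H) := by
    intro t ht
    let Y : 𝒳 := ⟨(-t + ·) '' T, h𝒳 _ _ hT⟩
    have hY : b ∈ (f Y : Set H) := by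
      refine hW Y fun w hw => ?_
      rw [mem_neg_translate_iff_of_pairwise hsparse ht hw, hO, Set.mem_singleton_iff]
    have hTY : T = (t + ·) '' (Y : Set G) := by simp [Y, ← Set.preimage_comp, Function.comp_def]
    rw [hf t Y ⟨T, hT⟩ hTY]
    exact ⟨b, hY, rfl⟩
  refine hlower ?_ (h𝒴 (-b) _ (f ⟨T, hT⟩).2)
  rintro _ ⟨t, ht, rfl⟩
  exact ⟨_, hmem t ht, by simp⟩

open scoped Pointwise in
theorem exists_mem_forall_sub_notMem {Y : Set G} (hY : Y.Infinite) (s W : Finset G) :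
    ∃ y ∈ Y, ∀ x ∈ s, y - x ∉ W ∧ x - y ∉ W := by
  classical
  obtain ⟨y, hyY, hy⟩ := hY.exists_notMem_finset ((W + s) ∪ (s - W))
  refine ⟨y, hyY, fun x hx => ⟨fun hw => hy ?_, fun hw => hy ?_⟩⟩
  · exact Finset.mem_union_left _ (Finset.mem_add.2 ⟨_, hw, x, hx, sub_add_cancel y x⟩)
  · exact Finset.mem_union_right _ (Finset.mem_sub.2 ⟨x, hx, _, hw, sub_sub_cancel x y⟩)

theorem exists_pairwise_sub_notMem {ι : Type*} [Finite ι] {Y : ι → Set G}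
    (hY : ∀ i, (Y i).Infinite) (W : Finset G) :
    ∃ t : ι → G, (∀ i, t i ∈ Y i) ∧ Pairwise fun i j => t i - t j ∉ W := by
  classical
  have := Fintype.ofFinite ι
  suffices h : ∀ s : Finset ι, ∃ t : ι → G, (∀ i, t i ∈ Y i) ∧
      ∀ i ∈ s, ∀ j ∈ s, i ≠ j → t i - t j ∉ W by
    obtain ⟨t, htY, ht⟩ := h Finset.univ
    exact ⟨t, htY, fun i j => ht i (Finset.mem_univ i) j (Finset.mem_univ j)⟩
  intro s
  induction s using Finset.induction_on with
  | empty =>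
    choose t ht using fun i => (hY i).nonempty
    exact ⟨t, ht, by simp⟩
  | insert a s ha ih =>
    obtain ⟨t, htY, ht⟩ := ih
    obtain ⟨y, hyY, hy⟩ := exists_mem_forall_sub_notMem (hY a) (s.image t) W
    rw [Finset.forall_mem_image] at hy
    have hupdate : ∀ i ∈ s, Function.update t a y i = t i :=
      fun i hi => Function.update_of_ne (ne_of_mem_of_not_mem hi ha) y t
    refine ⟨Function.update t a y, ?_, ?_⟩
    · exact (Function.forall_update_iff t fun i x => x ∈ Y i).2 ⟨hyY, fun i _ => htY i⟩
    · intro i hi j hj hij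
      rcases Finset.mem_insert.1 hi with rfl | his <;> rcases Finset.mem_insert.1 hj with rfl | hjs
      · exact absurd rfl hij
      · rw [Function.update_self, hupdate j hjs]
        exact (hy hjs).1
      · rw [Function.update_self, hupdate i his]
        exact (hy his).2
      · rw [hupdate i his, hupdate j hjs]
        exact ht i his j hjs hij

end Dynamics

section CosetCover

variable {G : Type*} [AddCommGroup G]

open scoped Pointwise in
theorem exists_mem_forall_add_notMem {ι : Type*} {B : AddSubgroup G} {H : ι → AddSubgroup G}
    {s : Finset ι} (hs : ∀ i ∈ s, (H i).relIndex B ≠ 0 → s.card < (H i).relIndex B) (c : G) :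
    ∃ x ∈ B, ∀ i ∈ s, c + x ∉ H i := by
  by_contra! hcover
  have hrep : ∀ i, ∃ g : B, (∃ x ∈ B, c + x ∈ H i) → c + (g : G) ∈ H i := fun i => by
    by_cases h : ∃ x ∈ B, c + x ∈ H i
    · obtain ⟨x, hxB, hx⟩ := h
      exact ⟨⟨x, hxB⟩, fun _ => hx⟩
    · exact ⟨0, fun h' => absurd h' h⟩
  choose g hg using hrep
  have hunion : ⋃ i ∈ s, g i +ᵥ ((H i).addSubgroupOf B : Set B) = Set.univ := by
    refine Set.eq_univ_of_forall fun x => ?_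
    obtain ⟨i, hi, hx⟩ := hcover x x.2
    refine Set.mem_iUnion₂.2 ⟨i, hi, Set.mem_vadd_set_iff_neg_vadd_mem.2 ?_⟩
    have hsub := (H i).sub_mem hx (hg i ⟨x, x.2, hx⟩)
    rwa [add_sub_add_left_eq_sub, sub_eq_neg_add] at hsub
  obtain ⟨i, hi, hfin, hle⟩ := AddSubgroup.exists_index_le_card_of_leftCoset_cover hunion
  exact (hs i hi hfin.index_ne_zero).not_ge hle

theorem mem_of_coprime_nsmul_mem {H : AddSubgroup G} {m n : ℕ} (hmn : m.Coprime n) {x : G}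
    (hm : m • x ∈ H) (hn : n • x ∈ H) : x ∈ H := by
  obtain ⟨u, v, huv⟩ := Nat.isCoprime_iff_coprime.2 hmn
  rw [← one_zsmul x, ← huv, add_zsmul, mul_zsmul, mul_zsmul, natCast_zsmul, natCast_zsmul]
  exact H.add_mem (H.zsmul_mem hm u) (H.zsmul_mem hn v)

theorem le_relIndex_of_prime_pow_nsmul_mem {H B : AddSubgroup G} {p N : ℕ} (hp : p.Prime)
    (hN : ∀ x ∈ B, p ^ N • x ∈ H) (hB : ¬ B ≤ H) (hfin : H.relIndex B ≠ 0) :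
    p ≤ H.relIndex B := by
  by_contra! hlt
  have hcop : (p ^ N).Coprime (H.relIndex B) := (Nat.coprime_of_lt_prime hfin hlt hp).pow_left N
  exact hB fun x hx => mem_of_coprime_nsmul_mem hcop (hN x hx)
    ((H.addSubgroupOf B).nsmul_index_mem ⟨x, hx⟩)

end CosetCover

section IdealArithmetic

variable {R S : Type*} [CommRing R] [CommRing S]

theorem natCast_mem_iff_dvd {I : Ideal R} (hI : I ≠ ⊤) {p : ℕ} (hp : p.Prime) (hpI : (p : R) ∈ I)
    {n : ℕ} : (n : R) ∈ I ↔ p ∣ n := by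
  refine ⟨fun hn => ?_, fun ⟨c, hc⟩ => ?_⟩
  · by_contra hdvd
    obtain ⟨u, v, huv⟩ := ((hp.coprime_iff_not_dvd.2 hdvd).cast : IsCoprime (p : R) n)
    exact hI ((Ideal.eq_top_iff_one I).2
      (huv ▸ I.add_mem (I.mul_mem_left u hpI) (I.mul_mem_left v hn)))
  · rw [hc, Nat.cast_mul]
    exact I.mul_mem_right _ hpI

theorem ne_bot_of_natCast_mem [CharZero R] {I : Ideal R} {n : ℕ} (hn : n ≠ 0)
    (hnI : (n : R) ∈ I) : I ≠ ⊥ := by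
  rintro rfl
  exact hn (Nat.cast_eq_zero.1 hnI)

theorem infinite_setOf_dvd_sub_and_dvd_sub [IsDomain R] [Infinite R] {a b : R}
    (hab : IsCoprime a b) (ha : a ≠ 0) (hb : b ≠ 0) (x y : R) :
    {z | a ∣ z - x ∧ b ∣ z - y}.Infinite := by
  obtain ⟨u, v, huv⟩ := hab
  have hinj : Function.Injective fun r => x + u * a * (y - x) + r * (a * b) :=
    (add_right_injective _).comp (mul_left_injective₀ (mul_ne_zero ha hb))
  refine Set.infinite_of_injective_forall_mem hinj fun r => ⟨?_, ?_⟩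
  · exact ⟨u * (y - x) + r * b, by ring⟩
  · exact ⟨v * (x - y) + r * a, by linear_combination (y - x) * huv⟩

/-- Some residue class modulo `I` is disjoint from `X`. -/
def OmitsResidueClass (I : Ideal R) (X : Set R) : Prop :=
  ∃ c, ∀ y ∈ X, y - c ∉ I

namespace OmitsResidueClass

variable {I : Ideal R} {X Y : Set R}

theorem mono (hX : OmitsResidueClass I X) (hYX : Y ⊆ X) : OmitsResidueClass I Y :=
  hX.imp fun _ hc y hy => hc y (hYX hy)

theorem translate (hX : OmitsResidueClass I X) (t : R) : OmitsResidueClass I ((t + ·) '' X) := by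
  obtain ⟨c, hc⟩ := hX
  refine ⟨t + c, ?_⟩
  rintro _ ⟨y, hy, rfl⟩
  rw [add_sub_add_left_eq_sub]
  exact hc y hy

theorem singleton_zero (hI : I ≠ ⊤) : OmitsResidueClass I ({0} : Set R) :=
  ⟨-1, fun y hy => by
    rw [Set.mem_singleton_iff.1 hy, sub_neg_eq_add, zero_add]
    exact (Ideal.ne_top_iff_one I).1 hI⟩

theorem range {ι : Type*} [Finite ι] (hI : Nat.card ι < Nat.card (R ⧸ I)) (t : ι → R) :
    OmitsResidueClass I (Set.range t) := by
  by_contra hnot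
  simp only [OmitsResidueClass, Set.forall_mem_range, not_exists, not_forall, not_not] at hnot
  have hsurj : Function.Surjective fun i => Ideal.Quotient.mk I (t i) := by
    intro y
    obtain ⟨c, rfl⟩ := Ideal.Quotient.mk_surjective y
    exact (hnot c).imp fun i hi => Ideal.Quotient.eq.2 hi
  exact hI.not_ge (Nat.card_le_card_of_surjective _ hsurj)

theorem image_ringEquiv {e : R ≃+* S} {J : Ideal S} (hX : OmitsResidueClass (J.comap e) X) :
    OmitsResidueClass J (e '' X) := by
  obtain ⟨c, hc⟩ := hX
  refine ⟨e c, ?_⟩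
  rintro _ ⟨y, hy, rfl⟩
  rw [← map_sub]
  exact hc y hy

end OmitsResidueClass

end IdealArithmetic

section Admissible

variable {K L : Type*} [Field K] [NumberField K] [Field L] [NumberField L] {k : ℕ}

theorem isLowerSet_admissibleSets : IsLowerSet (admissibleSets K k) :=
  fun _ _ hYX hX P hP hP0 => OmitsResidueClass.mono (hX P hP hP0) hYX

theorem isTranslationInvariant_admissibleSets : IsTranslationInvariant (admissibleSets K k) :=
  fun t _ hX P hP hP0 => OmitsResidueClass.translate (hX P hP hP0) t

theorem singleton_zero_mem_admissibleSets (hk : k ≠ 0) : {0} ∈ admissibleSets K k :=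
  fun P hP _ => OmitsResidueClass.singleton_zero
    (ne_top_of_le_ne_top hP.ne_top (Ideal.pow_le_self (I := P) hk))

theorem image_mem_admissibleSets (e : 𝓞 K ≃+* 𝓞 L) {X : Set (𝓞 K)} (hX : X ∈ admissibleSets K k) :
    e '' X ∈ admissibleSets L k := by
  intro Q hQ hQ0
  have hcomap : (Q ^ k).comap e = Q.comap e ^ k := by
    simp only [← Ideal.map_symm, Ideal.map_pow]
  refine OmitsResidueClass.image_ringEquiv (J := Q ^ k) (hcomap ▸ hX _ (hQ.comap e) fun h => hQ0 ?_)
  rw [← Ideal.map_comap_of_surjective e e.surjective Q, h, Ideal.map_bot]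

theorem image_mem_admissibleSets_iff (e : 𝓞 K ≃+* 𝓞 L) {X : Set (𝓞 K)} :
    e '' X ∈ admissibleSets L k ↔ X ∈ admissibleSets K k := by
  refine ⟨fun h => ?_, image_mem_admissibleSets e⟩
  simpa [Set.image_image] using image_mem_admissibleSets e.symm h

/-- The conjugacy of shift spaces induced by an isomorphism of rings of integers. -/
noncomputable def admissibleSetsCongr (k : ℕ) (e : 𝓞 K ≃+* 𝓞 L) :
    admissibleSets K k ≃ₜ admissibleSets L k :=
  (powerSetCongr e.toEquiv).subtype fun _ => (image_mem_admissibleSets_iff e).symm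

theorem isEquivariant_admissibleSetsCongr (e : 𝓞 K ≃+* 𝓞 L) :
    IsEquivariant e (admissibleSetsCongr k e) := by
  intro t X Y hXY
  change e '' (Y : Set (𝓞 K)) = (e t + ·) '' (e '' (X : Set (𝓞 K)))
  simp only [hXY, Set.image_image, map_add]

theorem range_mem_admissibleSets {ι : Type*} [Finite ι] (hk : k ≠ 0) {t : ι → 𝓞 K}
    (ht : ∀ P : Ideal (𝓞 K), P.IsPrime → P ≠ ⊥ → Ideal.absNorm P ≤ Nat.card ι →
      ∀ i, t i ∉ P ^ k) : Set.range t ∈ admissibleSets K k := by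
  intro P hP hP0
  rcases le_or_gt (Ideal.absNorm P) (Nat.card ι) with hsmall | hlarge
  · refine ⟨0, ?_⟩
    rintro _ ⟨i, rfl⟩
    simpa using ht P hP hP0 hsmall i
  · refine OmitsResidueClass.range (I := P ^ k) ?_ t
    change Nat.card ι < Ideal.absNorm (P ^ k)
    rw [map_pow]
    exact hlarge.trans_le (Nat.le_self_pow hk _)

theorem preservesSparse_of_isEquivariant {l : ℕ} (hk : k ≠ 0) {A : 𝓞 K → 𝓞 L}
    {f : admissibleSets K k → admissibleSets L l} (hf : IsEquivariant A f) (hcont : Continuous f)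
    (hinj : Function.Injective f) :
    PreservesSparse (admissibleSets K k) (admissibleSets L l) A := by
  let O : admissibleSets K k := ⟨{0}, singleton_zero_mem_admissibleSets hk⟩
  let I : admissibleSets K k := ⟨(1 + ·) '' {0}, isTranslationInvariant_admissibleSets 1 _ O.2⟩
  have hOI : O ≠ I := fun h => by simpa [O, I] using congrArg Subtype.val h
  exact hf.preservesSparse hcont isTranslationInvariant_admissibleSets
    isTranslationInvariant_admissibleSets isLowerSet_admissibleSets rfl
    (hf.nonempty_apply hinj hOI rfl)

end Admissible

section PrimesOver

theorem ncard_primesOver_le_finrank {R : Type*} (S : Type*) [CommRing R] [IsDomain R] [CommRing S]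
    [Algebra R S] [Module.Finite R S] [Module.Flat R S] (p : Ideal R) [p.IsPrime] :
    (p.primesOver S).ncard ≤ Module.finrank R S := by
  have : Fintype (p.primesOver S) := (Algebra.QuasiFinite.finite_primesOver p).fintype
  rw [← Ideal.sum_ramification_inertia_eq_finrank p S, Set.ncard_eq_toFinset_card',
    Set.toFinset_card, ← Finset.card_univ, Finset.card_eq_sum_ones]
  refine Finset.sum_le_sum fun ⟨Q, _, _⟩ _ => ?_
  exact Nat.mul_pos (Q.ramificationIdx_pos R) (Q.inertiaDeg_pos R)

theorem exists_prime_natCast_mem {R : Type*} [CommRing R] [IsDomain R] [Algebra.IsIntegral ℤ R]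
    {P : Ideal R} [P.IsPrime] (hP0 : P ≠ ⊥) : ∃ q : ℕ, q.Prime ∧ (q : R) ∈ P :=
  have : NeZero P := ⟨hP0⟩
  ⟨_, Nat.absNorm_under_prime P, Int.absNorm_under_mem P⟩

theorem exists_finset_primes_natCast_mem (L : Type*) [Field L] [NumberField L] {p : ℕ}
    (hp : p.Prime) : ∃ s : Finset (Ideal (𝓞 L)), s.card ≤ Module.finrank ℚ L ∧
      ∀ Q, Q ∈ s ↔ Q.IsPrime ∧ (p : 𝓞 L) ∈ Q := by
  have hpZ : Prime (p : ℤ) := Nat.prime_iff_prime_int.1 hp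
  have hprime : (Ideal.span {(p : ℤ)}).IsPrime :=
    (Ideal.span_singleton_prime hpZ.ne_zero).2 hpZ
  have hfin := Algebra.QuasiFinite.finite_primesOver (S := 𝓞 L) (Ideal.span {(p : ℤ)})
  refine ⟨hfin.toFinset, ?_, fun Q => ?_⟩
  · rw [← Set.ncard_eq_toFinset_card _ hfin, ← RingOfIntegers.rank]
    exact ncard_primesOver_le_finrank (𝓞 L) _
  · rw [Set.Finite.mem_toFinset]
    refine and_congr_right fun hQ => ?_
    rw [Ideal.liesOver_span_iff hQ.ne_top hpZ, map_natCast]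

theorem exists_coprime_forall_natCast_mem_pow {R : Type*} [CommRing R] [IsDomain R]
    [Algebra.IsIntegral ℤ R] {p : ℕ} (hp : p.Prime) (l : ℕ) {s : Set (Ideal R)} (hs : s.Finite)
    (hsP : ∀ Q ∈ s, Q.IsPrime ∧ Q ≠ ⊥ ∧ (p : R) ∉ Q) :
    ∃ M : ℕ, p.Coprime M ∧ ∀ Q ∈ s, (M : R) ∈ Q ^ l := by
  have hbelow : ∀ Q : Ideal R, ∃ q : ℕ, Q ∈ s → p.Coprime q ∧ (q : R) ∈ Q := by
    intro Q
    by_cases hQ : Q ∈ s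
    · obtain ⟨hprime, hbot, hpQ⟩ := hsP Q hQ
      obtain ⟨q, hq, hqQ⟩ := exists_prime_natCast_mem hbot
      exact ⟨q, fun _ => ⟨(Nat.coprime_primes hp hq).2 fun h => hpQ (h ▸ hqQ), hqQ⟩⟩
    · exact ⟨0, fun h => absurd h hQ⟩
  choose q hq using hbelow
  refine ⟨∏ Q ∈ hs.toFinset, q Q ^ l, ?_, fun Q hQ => ?_⟩
  · exact Nat.Coprime.prod_right fun Q hQ => ((hq Q (hs.mem_toFinset.1 hQ)).1).pow_right l
  · have hdvd := Finset.dvd_prod_of_mem (fun Q => q Q ^ l) (hs.mem_toFinset.2 hQ)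
    refine Ideal.mem_of_dvd _ (Nat.cast_dvd_cast hdvd) ?_
    rw [Nat.cast_pow]
    exact Ideal.pow_mem_pow (hq Q hQ).2 l

end PrimesOver

section PrimePowers

variable {K L : Type*} [Field K] [NumberField K] [Field L] [NumberField L] {p : ℕ}

theorem exists_mem_forall_map_add_notMem_pow {G : Type*} [AddCommGroup G] (A : G →+ 𝓞 L)
    {B : AddSubgroup G} (hp : p.Prime) (hpL : Module.finrank ℚ L < p) {l : ℕ}
    (hB : ∀ Q : Ideal (𝓞 L), Q.IsPrime → (p : 𝓞 L) ∈ Q → ∃ x ∈ B, A x ∉ Q ^ l) (c : G) :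
    ∃ x ∈ B, ∀ Q : Ideal (𝓞 L), Q.IsPrime → (p : 𝓞 L) ∈ Q → A (c + x) ∉ Q ^ l := by
  obtain ⟨s, hcard, hs⟩ := exists_finset_primes_natCast_mem L hp
  let H (Q : Ideal (𝓞 L)) : AddSubgroup G := (Q ^ l).toAddSubgroup.comap A
  have hindex : ∀ Q ∈ s, (H Q).relIndex B ≠ 0 → s.card < (H Q).relIndex B := by
    intro Q hQ hfin
    obtain ⟨hprime, hpQ⟩ := (hs Q).1 hQ
    obtain ⟨x, hxB, hx⟩ := hB Q hprime hpQ
    have hpow : ∀ y ∈ B, p ^ l • y ∈ H Q := fun y _ => by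
      change A (p ^ l • y) ∈ Q ^ l
      rw [map_nsmul, nsmul_eq_mul, Nat.cast_pow]
      exact Ideal.mul_mem_right _ _ (Ideal.pow_mem_pow hpQ l)
    exact (hcard.trans_lt hpL).trans_le
      (le_relIndex_of_prime_pow_nsmul_mem hp hpow (fun hle => hx (hle hxB)) hfin)
  obtain ⟨x, hxB, hx⟩ := exists_mem_forall_add_notMem hindex c
  exact ⟨x, hxB, fun Q hprime hpQ => hx Q ((hs Q).2 ⟨hprime, hpQ⟩)⟩

theorem infinite_setOf_dvd_sub_and_forall_notMem_pow (hp : p.Prime) {j l : ℕ} (hl : l ≠ 0)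
    (hlj : l ≤ j) {s : Set (Ideal (𝓞 L))} (hs : s.Finite) (hsP : ∀ Q ∈ s, Q.IsPrime ∧ Q ≠ ⊥)
    {y₀ : 𝓞 L} (hy₀ : ∀ Q ∈ s, (p : 𝓞 L) ∈ Q → y₀ ∉ Q ^ l) :
    {y | (p : 𝓞 L) ^ j ∣ y - y₀ ∧ ∀ Q ∈ s, y ∉ Q ^ l}.Infinite := by
  obtain ⟨M, hpM, hM⟩ := exists_coprime_forall_natCast_mem_pow hp l
    (hs.subset (Set.sep_subset s fun Q => (p : 𝓞 L) ∉ Q))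
    fun Q hQ => ⟨(hsP Q hQ.1).1, (hsP Q hQ.1).2, hQ.2⟩
  have hM0 : M ≠ 0 := by
    rintro rfl
    exact hp.one_lt.ne' ((Nat.coprime_zero_right p).1 hpM)
  have hcop : IsCoprime ((p : 𝓞 L) ^ j) (M : 𝓞 L) := hpM.cast.pow_left
  refine (infinite_setOf_dvd_sub_and_dvd_sub hcop (pow_ne_zero j (Nat.cast_ne_zero.2 hp.ne_zero))
    (Nat.cast_ne_zero.2 hM0) y₀ 1).mono ?_
  rintro y ⟨hpy, hMy⟩
  refine ⟨hpy, fun Q hQ hy => ?_⟩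
  by_cases hpQ : (p : 𝓞 L) ∈ Q
  · refine hy₀ Q hQ hpQ ((Submodule.sub_mem_iff_right _ hy).1 (Ideal.mem_of_dvd _ hpy ?_))
    exact Ideal.pow_le_pow_right hlj (Ideal.pow_mem_pow hpQ j)
  · have hone : (1 : 𝓞 L) ∈ Q ^ l :=
      (Submodule.sub_mem_iff_right _ hy).1 (Ideal.mem_of_dvd _ hMy (hM Q ⟨hQ, hpQ⟩))
    exact (hsP Q hQ).1.ne_top ((Ideal.eq_top_iff_one Q).2 (Ideal.pow_le_self hl hone))

theorem infinite_setOf_symm_sub_mem_pow_and_forall_notMem_pow {R : Type*} [CommRing R]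
    {k l : ℕ} (hl : l ≠ 0) (A : R ≃+ 𝓞 L) {P : Ideal R} (hp : p.Prime) (hpP : (p : R) ∈ P)
    (hpL : Module.finrank ℚ L < p)
    (hA : ∀ Q : Ideal (𝓞 L), Q.IsPrime → (p : 𝓞 L) ∈ Q → ∃ x ∈ P ^ k, A x ∉ Q ^ l)
    {s : Set (Ideal (𝓞 L))} (hs : s.Finite) (hsP : ∀ Q ∈ s, Q.IsPrime ∧ Q ≠ ⊥) (c : R) :
    {y | A.symm y - c ∈ P ^ k ∧ ∀ Q ∈ s, y ∉ Q ^ l}.Infinite := by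
  obtain ⟨x, hxP, hx⟩ := exists_mem_forall_map_add_notMem_pow (B := (P ^ k).toAddSubgroup)
    (A : R →+ 𝓞 L) hp hpL hA c
  refine (infinite_setOf_dvd_sub_and_forall_notMem_pow hp hl (Nat.le_add_left l k) hs hsP
    fun Q hQ hpQ => hx Q (hsP Q hQ).1 hpQ).mono ?_
  rintro y ⟨⟨z, hz⟩, hy⟩
  refine ⟨?_, hy⟩
  have hsymm : A.symm y - c = x + (p : R) ^ (k + l) * A.symm z := by
    rw [← Nat.cast_pow, ← nsmul_eq_mul] at hz ⊢
    rw [← map_nsmul, ← hz, map_sub, AddMonoidHom.coe_coe, A.symm_apply_apply]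
    ring
  rw [hsymm]
  refine (P ^ k).add_mem hxP (Ideal.mul_mem_right _ _ ?_)
  exact Ideal.pow_le_pow_right (Nat.le_add_right k l) (Ideal.pow_mem_pow hpP _)

theorem PreservesSparse.exists_forall_map_mem_pow {k l : ℕ} (hl : l ≠ 0) {A : 𝓞 K ≃+ 𝓞 L}
    (hA : PreservesSparse (admissibleSets L l) (admissibleSets K k) A.symm)
    {P : Ideal (𝓞 K)} [P.IsPrime] (hp : p.Prime) (hpP : (p : 𝓞 K) ∈ P)
    (hpL : Module.finrank ℚ L < p) :
    ∃ Q : Ideal (𝓞 L), Q.IsPrime ∧ (p : 𝓞 L) ∈ Q ∧ ∀ x ∈ P ^ k, A x ∈ Q ^ l := by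
  by_contra! hcon
  obtain ⟨W, hW⟩ := hA
  have hP0 : P ≠ ⊥ := ne_bot_of_natCast_mem hp.ne_zero hpP
  have : Finite (𝓞 K ⧸ P ^ k) := Ideal.finiteQuotientOfFreeOfNeBot _ (pow_ne_zero k hP0)
  let s : Set (Ideal (𝓞 L)) :=
    {Q | Ideal.absNorm Q ≤ Nat.card (𝓞 K ⧸ P ^ k)} ∩ {Q | Q.IsPrime ∧ Q ≠ ⊥}
  have hs : s.Finite := (Ideal.finite_setOfPred_absNorm_le _).inter_of_left _
  obtain ⟨t, htY, htW⟩ := exists_pairwise_sub_notMem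
    (fun c : 𝓞 K ⧸ P ^ k => infinite_setOf_symm_sub_mem_pow_and_forall_notMem_pow hl A hp hpP hpL
      hcon hs (fun _ hQ => hQ.2) c.out) W
  have ht : Set.range t ∈ admissibleSets L l :=
    range_mem_admissibleSets hl fun Q hQ hQ0 hcard i => (htY i).2 Q ⟨hcard, hQ, hQ0⟩
  have hsparse : (Set.range t).Pairwise fun x y => x - y ∉ W := by
    rintro _ ⟨i, rfl⟩ _ ⟨j, rfl⟩ hij
    exact htW fun h => hij (congrArg t h)
  obtain ⟨c, hc⟩ := hW _ ht hsparse P inferInstance hP0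
  let i := Ideal.Quotient.mk (P ^ k) c
  have hout : i.out - c ∈ P ^ k := Ideal.Quotient.eq.1 (Ideal.Quotient.mk_out i)
  refine hc (A.symm (t i)) ⟨_, ⟨i, rfl⟩, rfl⟩ ?_
  simpa using (P ^ k).add_mem (htY i).1 hout

theorem exists_forall_mem_pow_iff_map_mem_pow {k l : ℕ} (hk : k ≠ 0) (hl : l ≠ 0)
    {A : 𝓞 K ≃+ 𝓞 L} (hA : PreservesSparse (admissibleSets K k) (admissibleSets L l) A)
    (hA' : PreservesSparse (admissibleSets L l) (admissibleSets K k) A.symm)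
    {P : Ideal (𝓞 K)} [P.IsPrime] (hp : p.Prime) (hpP : (p : 𝓞 K) ∈ P)
    (hpK : Module.finrank ℚ K < p) (hpL : Module.finrank ℚ L < p) :
    ∃ Q : Ideal (𝓞 L), Q.IsPrime ∧ (p : 𝓞 L) ∈ Q ∧ ∀ x, x ∈ P ^ k ↔ A x ∈ Q ^ l := by
  obtain ⟨Q, hQ, hpQ, hPQ⟩ := hA'.exists_forall_map_mem_pow hl hp hpP hpL
  obtain ⟨P', hP', hpP', hQP⟩ :=
    PreservesSparse.exists_forall_map_mem_pow (A := A.symm) hk hA hp hpQ hpK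
  have hle : P ≤ P' := fun x hx => by
    have hx' := hQP _ (hPQ _ (Ideal.pow_mem_pow hx k))
    rw [A.symm_apply_apply] at hx'
    exact hP'.mem_of_pow_mem k (Ideal.pow_le_self hk hx')
  have hmax : P.IsMaximal :=
    Ring.DimensionLEOne.maximalOfPrime (ne_bot_of_natCast_mem hp.ne_zero hpP) inferInstance
  obtain rfl : P = P' := hmax.eq_of_le hP'.ne_top hle
  refine ⟨Q, hQ, hpQ, fun x => ⟨hPQ x, fun hx => ?_⟩⟩
  simpa using hQP _ hx

theorem notMem_pow_succ_of_notMem_sq {R : Type*} [CommRing R] [IsDedekindDomain R] {P : Ideal R}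
    [P.IsPrime] {a : R} (ha : a ∉ P ^ 2) (j : ℕ) : a ^ j ∉ P ^ (j + 1) := by
  rcases eq_or_ne P ⊥ with rfl | hP0
  · rw [pow_two, Ideal.bot_mul, Ideal.mem_bot] at ha
    rw [pow_succ, Ideal.mul_bot, Ideal.mem_bot]
    exact pow_ne_zero j ha
  have hP : Prime P := Ideal.prime_of_isPrime hP0 inferInstance
  have hmem (n : ℕ) (b : R) : b ∈ P ^ n ↔ n ≤ emultiplicity P (Ideal.span {b}) := by
    rw [← pow_dvd_iff_le_emultiplicity, Ideal.dvd_span_singleton]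
  have hle : emultiplicity P (Ideal.span {a}) ≤ 1 := by
    rw [hmem, not_le] at ha
    exact Order.le_of_lt_add_one (by simpa [one_add_one_eq_two] using ha)
  rw [hmem, ← Ideal.span_singleton_pow, emultiplicity_pow hP, not_le]
  calc j * emultiplicity P (Ideal.span {a}) ≤ j * 1 := by gcongr
    _ < (j + 1 : ℕ) := by exact_mod_cast (mul_one j).trans_lt j.lt_succ_self

theorem le_of_forall_mem_pow_iff_map_mem_pow {R S : Type*} [CommRing R] [IsDedekindDomain R]
    [CommRing S] {A : R ≃+ S} {P : Ideal R} [P.IsPrime] {Q : Ideal S} {p k l : ℕ}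
    (hA : ∀ x, x ∈ P ^ k ↔ A x ∈ Q ^ l) (hpP : (p : R) ∉ P ^ 2) (hpQ : (p : S) ∈ Q) : k ≤ l := by
  by_contra! hlt
  have hmem : (p : R) ^ l ∈ P ^ k := by
    rw [hA, ← nsmul_one, smul_pow, one_pow, map_nsmul, nsmul_eq_mul, Nat.cast_pow]
    exact Ideal.mul_mem_right _ _ (Ideal.pow_mem_pow hpQ l)
  exact notMem_pow_succ_of_notMem_sq hpP l (Ideal.pow_le_pow_right hlt hmem)

end PrimePowers

section DegreeOne

theorem algebraMap_int_quotient_surjective_iff {R : Type*} [CommRing R] {I : Ideal R} :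
    Function.Surjective (algebraMap ℤ (R ⧸ I)) ↔ ∀ x : R, ∃ m : ℤ, x - m ∈ I := by
  refine Ideal.Quotient.mk_surjective.forall.trans
    (forall_congr' fun x => exists_congr fun m => ?_)
  rw [← Ideal.Quotient.eq, map_intCast, eq_intCast, eq_comm]

theorem algebraMap_int_quotient_surjective_of_mem_conductor {R : Type*} [CommRing R] {P : Ideal R}
    {θ : R} {p n M : ℕ} (hpP : (p : R) ∈ P) (hpn : p.Coprime n) (hθ : 1 + n * θ ∈ P)
    (hpM : p.Coprime M) (hM : (M : R) ∈ conductor ℤ θ) :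
    Function.Surjective (algebraMap ℤ (R ⧸ P)) := by
  let C : Subalgebra ℤ (R ⧸ P) := ⊥
  have hdiv : ∀ {a : ℕ} {x : R}, p.Coprime a → Ideal.Quotient.mk P (a * x) ∈ C →
      Ideal.Quotient.mk P x ∈ C := by
    intro a x hpa hax
    have hpx : p • Ideal.Quotient.mk P x = 0 := by
      rw [nsmul_eq_mul, ← map_natCast (Ideal.Quotient.mk P), Ideal.Quotient.eq_zero_iff_mem.2 hpP,
        zero_mul]
    refine mem_of_coprime_nsmul_mem (H := (Subalgebra.toSubmodule C).toAddSubgroup) hpa ?_ ?_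
    · exact hpx ▸ C.zero_mem
    · rwa [← map_nsmul, nsmul_eq_mul]
  have hmem : θ ∈ C.comap (Ideal.Quotient.mkₐ ℤ P) := by
    refine hdiv hpn ?_
    have hneg : Ideal.Quotient.mk P (n * θ) = -1 := by
      rw [eq_neg_iff_add_eq_zero, add_comm, ← map_one (Ideal.Quotient.mk P), ← map_add]
      exact Ideal.Quotient.eq_zero_iff_mem.2 hθ
    exact hneg ▸ C.neg_mem C.one_mem
  refine Ideal.Quotient.mk_surjective.forall.2 fun x => ?_
  have hx : Ideal.Quotient.mk P (M * x) ∈ C :=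
    Algebra.adjoin_le (Set.singleton_subset_iff.2 hmem) (mem_conductor_iff.1 hM x)
  exact Algebra.mem_bot.1 (hdiv hpM hx)

/-- `P` is a prime ideal above the rational prime `p`, unramified and of residue degree one. The
last condition is expressed by saying that every residue class modulo `P` contains an integer. -/
structure IsUnramifiedDegreeOne {R : Type*} [CommRing R] (p : ℕ) (P : Ideal R) : Prop where
  natPrime : p.Prime
  isPrime : P.IsPrime
  natCast_mem : (p : R) ∈ P
  natCast_notMem_sq : (p : R) ∉ P ^ 2
  algebraMap_surjective : Function.Surjective (algebraMap ℤ (R ⧸ P))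

theorem IsUnramifiedDegreeOne.algebraMap_int_quotient_pow_surjective {R : Type*} [CommRing R]
    [CharZero R] [IsDedekindDomain R] {p : ℕ} {P : Ideal R} (hP : IsUnramifiedDegreeOne p P)
    (k : ℕ) : Function.Surjective (algebraMap ℤ (R ⧸ P ^ k)) := by
  have := hP.isPrime
  have hP0 : P ≠ ⊥ := ne_bot_of_natCast_mem hP.natPrime.ne_zero hP.natCast_mem
  rw [algebraMap_int_quotient_surjective_iff]
  induction k with
  | zero => exact fun x => ⟨0, by simp⟩
  | succ k ih =>
    intro x
    obtain ⟨m, hm⟩ := ih x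
    have hpow : (p : R) ^ k ∈ P ^ k := Ideal.pow_mem_pow hP.natCast_mem k
    obtain ⟨d, e, he, hde⟩ := Ideal.exists_mul_add_mem_pow_succ hP0 ((p : R) ^ k) (x - m) hpow
      (notMem_pow_succ_of_notMem_sq hP.natCast_notMem_sq k) hm
    obtain ⟨n, hn⟩ := algebraMap_int_quotient_surjective_iff.1 hP.algebraMap_surjective d
    refine ⟨m + p ^ k * n, ?_⟩
    have hsplit : x - (m + p ^ k * n : ℤ) = (p : R) ^ k * (d - n) + e := by
      push_cast
      linear_combination -hde
    rw [hsplit]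
    exact Ideal.add_mem _ (pow_succ P k ▸ Ideal.mul_mem_mul hpow hn) he

variable {K : Type*} [Field K] [NumberField K]

theorem not_isUnit_of_forall_one_lt {x : 𝓞 K} (hx : ∀ w : InfinitePlace K, 1 < w (x : K)) :
    ¬ IsUnit x := by
  rintro ⟨u, rfl⟩
  have hinv : ∀ w : InfinitePlace K, w ((u⁻¹ : (𝓞 K)ˣ) : 𝓞 K) < 1 := fun w => by
    have hw := hx w
    have hmul : w ((u : 𝓞 K) : K) * w (((u⁻¹ : (𝓞 K)ˣ) : 𝓞 K) : K) = 1 := by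
      rw [← map_mul, ← map_mul, Units.mul_inv, map_one, map_one]
    nlinarith
  obtain ⟨w⟩ : Nonempty (InfinitePlace K) := inferInstance
  exact (InfinitePlace.one_le_of_lt_one (Units.ne_zero _) fun z _ => hinv z).not_gt (hinv w)

theorem eventually_not_isUnit_one_add_natCast_mul {θ : 𝓞 K} (hθ : θ ≠ 0) :
    ∀ᶠ n : ℕ in Filter.atTop, ¬ IsUnit (1 + n * θ) := by
  have hlarge : ∀ w : InfinitePlace K, ∀ᶠ n : ℕ in Filter.atTop, 2 < n * w (θ : K) := fun w =>
    (tendsto_natCast_atTop_atTop.atTop_mul_const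
      (InfinitePlace.pos_iff.2 (RingOfIntegers.coe_ne_zero_iff.2 hθ))).eventually_gt_atTop 2
  filter_upwards [Filter.eventually_all.2 hlarge] with n hn
  refine not_isUnit_of_forall_one_lt fun w => ?_
  have hle : w (n * (θ : K)) ≤ w (1 + n * (θ : K)) + w 1 := by
    have hsub := w.1.sub_le_add (1 + n * (θ : K)) 1
    rwa [add_sub_cancel_left] at hsub
  have hcast : w (n * (θ : K)) = n * w (θ : K) := by
    rw [map_mul, ← w.norm_embedding_eq (n : K), map_natCast, Complex.norm_natCast]
  have hw := hn w
  rw [hcast, map_one] at hle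
  push_cast
  linarith

theorem exists_adjoin_eq_top (K : Type*) [Field K] [NumberField K] :
    ∃ θ : 𝓞 K, θ ≠ 0 ∧ Algebra.adjoin ℚ {(θ : K)} = ⊤ := by
  obtain ⟨α, hα0, hα⟩ : ∃ α : K, α ≠ 0 ∧ IntermediateField.adjoin ℚ {α} = ⊤ := by
    obtain ⟨α, hα⟩ := Field.exists_primitive_element ℚ K
    rcases eq_or_ne α 0 with rfl | hα0
    · exact ⟨1, one_ne_zero, by rw [IntermediateField.adjoin_one, ← hα,
        IntermediateField.adjoin_zero]⟩
    · exact ⟨α, hα0, hα⟩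
  obtain ⟨m, hm0, hint⟩ := ((IsFractionRing.isAlgebraic_iff ℤ ℚ K).2
    (Algebra.IsAlgebraic.isAlgebraic (R := ℚ) α)).exists_integral_multiple
  have hmK : (m : K) ≠ 0 := Int.cast_ne_zero.2 hm0
  refine ⟨⟨m • α, hint⟩, fun h => smul_ne_zero hm0 hα0 (congrArg (algebraMap (𝓞 K) K) h), ?_⟩
  change Algebra.adjoin ℚ {m • α} = ⊤
  rw [← IntermediateField.adjoin_simple_toSubalgebra_of_isAlgebraic
    (Algebra.IsAlgebraic.isAlgebraic (m • α)), ← IntermediateField.top_toSubalgebra]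
  congr 1
  rw [eq_top_iff, ← hα, IntermediateField.adjoin_simple_le_iff, zsmul_eq_mul]
  have hdiv := mul_mem (inv_mem (intCast_mem _ m))
    (IntermediateField.mem_adjoin_simple_self ℚ (m * α))
  rwa [inv_mul_cancel_left₀ hmK] at hdiv

theorem aeval_derivative_minpoly_ne_zero (θ : 𝓞 K) :
    Polynomial.aeval θ (minpoly ℤ θ).derivative ≠ 0 := by
  have hsep : Polynomial.aeval (θ : K) (minpoly ℚ (θ : K)).derivative ≠ 0 :=
    (Algebra.IsSeparable.isSeparable ℚ (θ : K)).aeval_derivative_ne_zero (minpoly.aeval _ _)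
  rw [minpoly.isIntegrallyClosed_eq_field_fractions ℚ K θ.isIntegral, Polynomial.derivative_map,
    Polynomial.aeval_map_algebraMap, Polynomial.aeval_algebraMap_apply] at hsep
  exact RingOfIntegers.coe_ne_zero_iff.1 hsep

theorem exists_natCast_ne_zero_mem {I : Ideal (𝓞 K)} (hI : I ≠ ⊥) :
    ∃ M : ℕ, M ≠ 0 ∧ (M : 𝓞 K) ∈ I :=
  ⟨_, Ideal.absNorm_eq_zero_iff.not.2 hI, Ideal.absNorm_mem I⟩

theorem exists_natCast_mem_conductor_and_mem_differentIdeal {θ : 𝓞 K}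
    (hθ : Algebra.adjoin ℚ {(θ : K)} = ⊤) :
    ∃ M : ℕ, M ≠ 0 ∧ (M : 𝓞 K) ∈ conductor ℤ θ ∧ (M : 𝓞 K) ∈ differentIdeal ℤ (𝓞 K) := by
  obtain ⟨M, hM0, hM⟩ := exists_natCast_ne_zero_mem
    (Ideal.span_singleton_eq_bot.not.2 (aeval_derivative_minpoly_ne_zero θ))
  rw [← conductor_mul_differentIdeal ℤ ℚ K θ hθ] at hM
  exact ⟨M, hM0, Ideal.mul_le_left hM, Ideal.mul_le_right hM⟩

theorem natCast_notMem_sq_of_mem_differentIdeal {P : Ideal (𝓞 K)} (hP : P ≠ ⊤) {p M : ℕ}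
    (hp : p.Prime) (hpP : (p : 𝓞 K) ∈ P) (hpM : ¬ p ∣ M)
    (hM : (M : 𝓞 K) ∈ differentIdeal ℤ (𝓞 K)) : (p : 𝓞 K) ∉ P ^ 2 := by
  intro hp2
  have hmax : (Ideal.span {(p : ℤ)}).IsMaximal :=
    have := Fact.mk hp
    Int.ideal_span_isMaximal_of_prime p
  have hdvd : P ^ 2 ∣ Ideal.map (algebraMap ℤ (𝓞 K)) (Ideal.span {(p : ℤ)}) := by
    rw [Ideal.map_span, Set.image_singleton, Ideal.dvd_span_singleton]
    simpa using hp2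
  have hdiff := pow_sub_one_dvd_differentIdeal ℤ P 2 (by simpa using hp.ne_zero) hdvd
  rw [Nat.add_one_sub_one, pow_one, Ideal.dvd_iff_le] at hdiff
  exact hpM ((natCast_mem_iff_dvd hP hp hpP).1 (hdiff hM))

theorem exists_isUnramifiedDegreeOne (K : Type*) [Field K] [NumberField K] (B : ℕ) :
    ∃ (p : ℕ) (P : Ideal (𝓞 K)), B < p ∧ IsUnramifiedDegreeOne p P := by
  obtain ⟨θ, hθ0, hθ⟩ := exists_adjoin_eq_top K
  obtain ⟨M, hM0, hMcond, hMdiff⟩ := exists_natCast_mem_conductor_and_mem_differentIdeal hθ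
  obtain ⟨m, hm⟩ := Filter.eventually_atTop.1 (eventually_not_isUnit_one_add_natCast_mul hθ0)
  let n := B.factorial * M * m
  have hmn : m ≤ n :=
    Nat.le_mul_of_pos_left m (Nat.mul_pos B.factorial_pos (Nat.pos_of_ne_zero hM0))
  obtain ⟨P, hP, hnP⟩ := exists_max_ideal_of_mem_nonunits (hm n hmn)
  obtain ⟨p, hp, hpP⟩ := exists_prime_natCast_mem
    (Ring.ne_bot_of_isMaximal_of_not_isField hP (RingOfIntegers.not_isField K))
  have hpn : ¬ p ∣ n := fun h => by
    have hmul : (n : 𝓞 K) * θ ∈ P :=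
      P.mul_mem_right θ ((natCast_mem_iff_dvd hP.ne_top hp hpP).2 h)
    exact hP.ne_top ((Ideal.eq_top_iff_one P).2 ((Ideal.add_mem_iff_left P hmul).1 hnP))
  have hpM : ¬ p ∣ M := fun h => hpn ((h.mul_left _).mul_right m)
  have hpB : ¬ p ∣ B.factorial := fun h => hpn ((h.mul_right M).mul_right m)
  refine ⟨p, P, not_le.1 (mt hp.dvd_factorial.2 hpB), hp, hP.isPrime, hpP, ?_, ?_⟩
  · exact natCast_notMem_sq_of_mem_differentIdeal hP.ne_top hp hpP hpM hMdiff
  · exact algebraMap_int_quotient_surjective_of_mem_conductor hpP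
      (hp.coprime_iff_not_dvd.2 hpn) hnP (hp.coprime_iff_not_dvd.2 hpM) hMcond

end DegreeOne

section Multiplicativity

theorem map_mul_map_sub_mem_of_forall_map_mem {R S : Type*} [CommRing R] [CommRing S]
    {I : Ideal R} {J : Ideal S} {A : R →+ S} (hI : Function.Surjective (algebraMap ℤ (R ⧸ I)))
    (hA : ∀ x ∈ I, A x ∈ J) (x y : R) : A x * A y - A 1 * A (x * y) ∈ J := by
  obtain ⟨m, hm⟩ := algebraMap_int_quotient_surjective_iff.1 hI x
  have hx : A x = A (x - m) + m * A 1 := by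
    rw [← zsmul_eq_mul, ← map_zsmul, ← map_add, zsmul_one, sub_add_cancel]
  have hxy : A (x * y) = A ((x - m) * y) + m * A y := by
    rw [← zsmul_eq_mul, ← map_zsmul, ← map_add, zsmul_eq_mul, sub_mul, sub_add_cancel]
  have hdiff : A x * A y - A 1 * A (x * y) = A (x - m) * A y - A 1 * A ((x - m) * y) := by
    rw [hx, hxy]
    ring
  rw [hdiff]
  exact J.sub_mem (J.mul_mem_right _ (hA _ hm))
    (J.mul_mem_left _ (hA _ (I.mul_mem_right y hm)))

theorem nonempty_ringEquiv_of_map_mul_map {R S : Type*} [CommRing R] [CommRing S] (A : R ≃+ S)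
    (hA : ∀ x y, A x * A y = A 1 * A (x * y)) : Nonempty (R ≃+* S) := by
  obtain ⟨a, ha⟩ := A.surjective 1
  obtain ⟨u, hu⟩ : IsUnit (A 1) := by
    refine IsUnit.of_mul_eq_one (A (a * a)) ?_
    rw [← hA, ha, one_mul]
  refine ⟨{ A.trans (AddAut.mulLeft u⁻¹) with map_mul' := fun x y => ?_ }⟩
  change u⁻¹ • A (x * y) = u⁻¹ • A x * u⁻¹ • A y
  rw [smul_mul_smul_comm, hA, ← hu, mul_smul, ← smul_eq_mul (u : S), ← Units.smul_def,
    inv_smul_smul]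

variable {K L : Type*} [Field K] [NumberField K] [Field L] [NumberField L]

theorem eq_zero_of_forall_exists_natCast_mem {z : 𝓞 K}
    (hz : ∀ B : ℕ, ∃ (p : ℕ) (P : Ideal (𝓞 K)),
      B < p ∧ p.Prime ∧ P ≠ ⊤ ∧ (p : 𝓞 K) ∈ P ∧ z ∈ P) : z = 0 := by
  by_contra hz0
  obtain ⟨M, hM0, hM⟩ := exists_natCast_ne_zero_mem (Ideal.span_singleton_eq_bot.not.2 hz0)
  obtain ⟨p, P, hMp, hp, hP, hpP, hzP⟩ := hz M
  have hMP : (M : 𝓞 K) ∈ P := (Ideal.span_singleton_le_iff_mem P).2 hzP hM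
  exact Nat.not_dvd_of_pos_of_lt (Nat.pos_of_ne_zero hM0) hMp
    ((natCast_mem_iff_dvd hP hp hpP).1 hMP)

theorem exists_isUnramifiedDegreeOne_forall_mem_pow_iff {k l : ℕ} (hk : k ≠ 0) (hl : l ≠ 0)
    {A : 𝓞 K ≃+ 𝓞 L} (hA : PreservesSparse (admissibleSets K k) (admissibleSets L l) A)
    (hA' : PreservesSparse (admissibleSets L l) (admissibleSets K k) A.symm) (B : ℕ) :
    ∃ (p : ℕ) (P : Ideal (𝓞 K)) (Q : Ideal (𝓞 L)), B < p ∧ IsUnramifiedDegreeOne p P ∧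
      Q.IsPrime ∧ (p : 𝓞 L) ∈ Q ∧ ∀ x, x ∈ P ^ k ↔ A x ∈ Q ^ l := by
  obtain ⟨p, P, hBp, hP⟩ := exists_isUnramifiedDegreeOne K
    (max B (max (Module.finrank ℚ K) (Module.finrank ℚ L)))
  simp only [max_lt_iff] at hBp
  have := hP.isPrime
  obtain ⟨Q, hQ, hpQ, hPQ⟩ := exists_forall_mem_pow_iff_map_mem_pow hk hl hA hA' hP.natPrime
    hP.natCast_mem hBp.2.1 hBp.2.2
  exact ⟨p, P, Q, hBp.1, hP, hQ, hpQ, hPQ⟩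

theorem map_mul_map_of_preservesSparse {k l : ℕ} (hk : k ≠ 0) (hl : l ≠ 0) {A : 𝓞 K ≃+ 𝓞 L}
    (hA : PreservesSparse (admissibleSets K k) (admissibleSets L l) A)
    (hA' : PreservesSparse (admissibleSets L l) (admissibleSets K k) A.symm) (x y : 𝓞 K) :
    A x * A y = A 1 * A (x * y) := by
  refine sub_eq_zero.1 (eq_zero_of_forall_exists_natCast_mem fun B => ?_)
  obtain ⟨p, P, Q, hBp, hP, hQ, hpQ, hPQ⟩ :=
    exists_isUnramifiedDegreeOne_forall_mem_pow_iff hk hl hA hA' B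
  refine ⟨p, Q, hBp, hP.natPrime, hQ.ne_top, hpQ, Ideal.pow_le_self hl ?_⟩
  exact map_mul_map_sub_mem_of_forall_map_mem (A := A.toAddMonoidHom)
    (hP.algebraMap_int_quotient_pow_surjective k) (fun z => (hPQ z).1) x y

theorem le_of_preservesSparse {k l : ℕ} (hk : k ≠ 0) (hl : l ≠ 0) {A : 𝓞 K ≃+ 𝓞 L}
    (hA : PreservesSparse (admissibleSets K k) (admissibleSets L l) A)
    (hA' : PreservesSparse (admissibleSets L l) (admissibleSets K k) A.symm) : k ≤ l := by
  obtain ⟨p, P, Q, -, hP, -, hpQ, hPQ⟩ :=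
    exists_isUnramifiedDegreeOne_forall_mem_pow_iff hk hl hA hA' 0
  have := hP.isPrime
  exact le_of_forall_mem_pow_iff_map_mem_pow hPQ hP.natCast_notMem_sq hpQ

end Multiplicativity

theorem conjugacy_iff_general {K L : Type*} [Field K] [NumberField K]
    [Field L] [NumberField L] (k l : ℕ) (hk : k ≠ 0) (hl : l ≠ 0) :
    (∃ (A : 𝓞 K ≃+ 𝓞 L) (f : ↥(admissibleSets K k) ≃ₜ ↥(admissibleSets L l)),
      ∀ (t : 𝓞 K) (X Y : ↥(admissibleSets K k)),
        (Y : Set (𝓞 K)) = (t + ·) '' (X : Set (𝓞 K)) →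
        ((f Y : Set (𝓞 L))) = (A t + ·) '' ((f X : Set (𝓞 L)))) ↔
      (Nonempty (K ≃+* L) ∧ k = l) := by
  constructor
  · rintro ⟨A, f, hf : IsEquivariant A f⟩
    have hf' : IsEquivariant A.symm f.symm :=
      IsEquivariant.symm (A := A.toEquiv) (f := f.toEquiv) hf isTranslationInvariant_admissibleSets
    have hA := preservesSparse_of_isEquivariant hk hf f.continuous f.injective
    have hA' := preservesSparse_of_isEquivariant hl hf' f.symm.continuous f.symm.injective
    obtain ⟨e⟩ := nonempty_ringEquiv_of_map_mul_map A (map_mul_map_of_preservesSparse hk hl hA hA')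
    exact ⟨⟨IsFractionRing.ringEquivOfRingEquiv e⟩, le_antisymm
      (le_of_preservesSparse hk hl hA hA') (le_of_preservesSparse hl hk hA' hA)⟩
  · rintro ⟨⟨φ⟩, rfl⟩
    let e : 𝓞 K ≃+* 𝓞 L := RingOfIntegers.mapRingEquiv φ
    exact ⟨e.toAddEquiv, admissibleSetsCongr k e, isEquivariant_admissibleSetsCongr e⟩

/-- For `k, l ≥ 2`, the shift spaces `𝔻_{K,k}` and `𝔻_{L,l}` are topologically
conjugate if and only if `K ≅ L` as fields and `k = l`. -/
theorem conjugacy_iff {K L : Type*} [Field K] [NumberField K]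
    [Field L] [NumberField L] (k l : ℕ) (hk : 2 ≤ k) (hl : 2 ≤ l) :
    (∃ (A : 𝓞 K ≃+ 𝓞 L) (f : ↥(admissibleSets K k) ≃ₜ ↥(admissibleSets L l)),
      ∀ (t : 𝓞 K) (X Y : ↥(admissibleSets K k)),
        (Y : Set (𝓞 K)) = (t + ·) '' (X : Set (𝓞 K)) →
        ((f Y : Set (𝓞 L))) = (A t + ·) '' ((f X : Set (𝓞 L)))) ↔
      (Nonempty (K ≃+* L) ∧ k = l) :=
  conjugacy_iff_general k l (by lia) (by lia)
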